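/- The set S := { t·(1, 7, 49, 343, 2401) : t ∈ ℤ/382ℤ } ⊆ (ℤ/382ℤ)⁵ (entries taken modulo 382) is an independent set of cardinality 382 in C_{108,382}^{⊠5}; equivalently, for all distinct s, t ∈ ℤ/382ℤ there exists i ∈ {0, 1, 2, 3, 4} such that δ(7ⁱ·s, 7ⁱ·t) ≥ 108 modulo 382. -/

import Mathlib

/-- The circular (Lee) distance on `ℤ/qℤ`: `δ(x,y) = min(|x-y|, q-|x-y|)`,
with representatives taken in `{0,…,q-1}`. -/
def circDist (q : ℕ) (x y : ZMod q) : ℕ := min (x - y).val (y - x).val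

/-! The set `S` is the image of the additive homomorphism `t ↦ t·(1, 7, 49, 343, 2401)`, and `δ` is
translation invariant. So, as for the minimum distance of a linear code, comparing two words of `S`
reduces to comparing one nonzero word with `0`, which leaves 381 words to inspect instead of all
pairs. -/

open Function

section CircSeparated

variable {q d : ℕ} {ι : Type*}

theorem circDist_self (x : ZMod q) : circDist q x x = 0 := by
  simp only [circDist, sub_self, ZMod.val_zero, min_self]

theorem circDist_sub_zero (x y : ZMod q) : circDist q (x - y) 0 = circDist q x y := by
  simp only [circDist, sub_zero, zero_sub, neg_sub]

/-- Two words are separated at distance `d` if some coordinate has circular distance at least `d`.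
A set of words is independent in the strong power `C_{d,q}^{⊠ι}` iff its distinct members are
pairwise separated. -/
def CircSeparated (q d : ℕ) {ι : Type*} (u v : ι → ZMod q) : Prop :=
  ∃ i, d ≤ circDist q (u i) (v i)

theorem CircSeparated.ne (hd : 0 < d) {u v : ι → ZMod q} (h : CircSeparated q d u v) : u ≠ v := by
  rintro rfl
  obtain ⟨i, hi⟩ := h
  rw [circDist_self] at hi
  exact hd.not_ge hi

theorem circSeparated_sub_zero {u v : ι → ZMod q} :
    CircSeparated q d (u - v) 0 ↔ CircSeparated q d u v := by
  simp only [CircSeparated, Pi.sub_apply, Pi.zero_apply, circDist_sub_zero]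

theorem injective_of_pairwise_circSeparated {α : Type*} {f : α → ι → ZMod q} (hd : 0 < d)
    (hf : Pairwise (CircSeparated q d on f)) : Injective f :=
  injective_iff_pairwise_ne.2 (hf.mono fun _ _ h => h.ne hd)

theorem pairwise_circSeparated_of_forall_ne_zero {F G : Type*} [AddGroup G]
    [FunLike F G (ι → ZMod q)] [AddMonoidHomClass F G (ι → ZMod q)] (f : F)
    (hf : ∀ x ≠ 0, CircSeparated q d (f x) 0) : Pairwise (CircSeparated q d on f) := by
  intro x y hxy
  rw [onFun, ← circSeparated_sub_zero, ← map_sub]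
  exact hf (x - y) (sub_ne_zero.2 hxy)

end CircSeparated

theorem circSeparated_mul_seven_pow_zero :
    ∀ t : ZMod 382, t ≠ 0 → CircSeparated 382 108 (fun i : Fin 5 => t * 7 ^ (i : ℕ)) 0 := by
  unfold CircSeparated
  decide +kernel

theorem pairwise_circSeparated_mul_seven_pow :
    Pairwise (CircSeparated 382 108 on fun (t : ZMod 382) (i : Fin 5) => t * 7 ^ (i : ℕ)) :=
  pairwise_circSeparated_of_forall_ne_zero
    (LinearMap.toSpanSingleton (ZMod 382) (Fin 5 → ZMod 382) fun i => 7 ^ (i : ℕ))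
    circSeparated_mul_seven_pow_zero

/-- The set `S = { t·(1,7,49,343,2401) : t ∈ ℤ/382ℤ }` is an independent set of
cardinality 382 in `C_{108,382}^{⊠5}`; equivalently, for all distinct
`s, t ∈ ℤ/382ℤ` there is an `i ∈ {0,…,4}` with `δ(7ⁱ·s, 7ⁱ·t) ≥ 108`. -/
theorem independent_set_382 :
    (Finset.image (fun t : ZMod 382 => fun i : Fin 5 => t * (7 : ZMod 382) ^ (i : ℕ))
        Finset.univ).card = 382
    ∧ (∀ u ∈ Finset.image (fun t : ZMod 382 => fun i : Fin 5 => t * (7 : ZMod 382) ^ (i : ℕ))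
          Finset.univ,
       ∀ v ∈ Finset.image (fun t : ZMod 382 => fun i : Fin 5 => t * (7 : ZMod 382) ^ (i : ℕ))
          Finset.univ,
        u ≠ v → ∃ i : Fin 5, 108 ≤ circDist 382 (u i) (v i))
    ∧ ∀ s t : ZMod 382, s ≠ t →
        ∃ i : Fin 5, 108 ≤ circDist 382 ((7 : ZMod 382) ^ (i : ℕ) * s)
          ((7 : ZMod 382) ^ (i : ℕ) * t) := by
  have hsep := pairwise_circSeparated_mul_seven_pow
  refine ⟨?_, ?_, fun s t hst => ?_⟩
  · rw [Finset.card_image_of_injective _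
      (injective_of_pairwise_circSeparated (by norm_num) hsep), Finset.card_univ, ZMod.card]
  · simp only [Finset.mem_image, Finset.mem_univ, true_and]
    exact hsep.range_pairwise
  · simpa only [onFun, CircSeparated, mul_comm] using hsep hst
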